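/- Let (X,d) be a quasi-metric space with triangular constant κ ≥ 1, let μ be a Borel measure making (X,d,μ) η-Ahlfors regular for some η > 0, and let ρ be the third order hypermetric induced by d. Let 0 < γ < 2η. Then for every p₁ > 1, p₂ > 1 and p₃ with 0 < 1/p₃ = 1/p₁ + 1/p₂ − (2η−γ)/η, there exists a constant C > 0 such that ‖T^γ(f,g)‖_{L^{p₃}(μ)} ≤ C ‖f‖_{L^{p₁}(μ)} ‖g‖_{L^{p₂}(μ)} for every pair f, g of nonnegative measurable functions on X. -/

import Mathlib

open MeasureTheory ENNReal

/-- The third order hypermetric induced by `d`: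
`ρ(x,y,z) = inf_{u ∈ X} max {d(x,u), d(y,u), d(z,u)}`. -/
noncomputable def hyperRho {X : Type*} (d : X → X → ℝ) (x y z : X) : ℝ :=
  ⨅ u : X, max (d x u) (max (d y u) (d z u))

/-- `d` is a quasi-metric on `X` with triangular constant `κ`. -/
def IsQuasiMetric {X : Type*} (d : X → X → ℝ) (κ : ℝ) : Prop :=
  (∀ x y, 0 ≤ d x y) ∧ (∀ x y, (d x y = 0 ↔ x = y)) ∧ (∀ x y, d x y = d y x) ∧
    (∀ x y z, d x z ≤ κ * (d x y + d y z))

/-- `(X,d,μ)` is `η`-Ahlfors regular with constants `a ≤ A`. -/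
def IsAhlfors {X : Type*} [MeasurableSpace X] (d : X → X → ℝ) (μ : Measure X)
    (η a A : ℝ) : Prop :=
  ∀ x : X, ∀ r : ℝ, 0 < r →
    ENNReal.ofReal (a * r ^ η) ≤ μ {y | d x y < r} ∧
      μ {y | d x y < r} ≤ ENNReal.ofReal (A * r ^ η)

/-- The bilinear fractional integral operator
`T^γ(f,g)(x) = ∬ f(y) g(z) ρ(x,y,z)^{-γ} dμ(y) dμ(z)`
(with the convention `0 ^ (-γ) = ∞` for `γ > 0`, as in `ENNReal.rpow`). -/
noncomputable def Tgamma {X : Type*} [MeasurableSpace X] (d : X → X → ℝ)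
    (μ : Measure X) (γ : ℝ) (f g : X → ℝ≥0∞) (x : X) : ℝ≥0∞ :=
  ∫⁻ y, ∫⁻ z, f y * g z * (ENNReal.ofReal (hyperRho d x y z)) ^ (-γ) ∂μ ∂μ

/-- The linear fractional integral operator of order `β` in the `η`-dimensional
space `(X,d,μ)`: `I_β h(x) = ∫ h(y) d(x,y)^{β-η} dμ(y)`. -/
noncomputable def fracInt {X : Type*} [MeasurableSpace X] (d : X → X → ℝ)
    (μ : Measure X) (β η : ℝ) (h : X → ℝ≥0∞) (x : X) : ℝ≥0∞ :=
  ∫⁻ y, h y * (ENNReal.ofReal (d x y)) ^ (β - η) ∂μ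

/-- The `L^p(μ)` norm of a nonnegative function, `p` a real exponent. -/
noncomputable def lpNorm {X : Type*} [MeasurableSpace X] (μ : Measure X) (p : ℝ)
    (h : X → ℝ≥0∞) : ℝ≥0∞ :=
  (∫⁻ x, (h x) ^ p ∂μ) ^ (1 / p)

/-!
Both `d x y` and `d x z` are at most `2 * κ * ρ(x, y, z)`, so the kernel `ρ ^ (-γ)` is dominated by
a product of two linear kernels, and `T^γ(f, g)` is bounded pointwise by `I_β₁ f * I_β₂ g` with
`β₁ + β₂ = 2 * η - γ`. Hölder's inequality then reduces the theorem to the Hardy–Littlewood–Sobolev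
inequality for each factor.

The latter holds for every kernel `W ^ c`, `c < 1`, with `W` in weak `L¹` uniformly in each variable
(here `W = d ^ (-η)`), and needs neither duality nor interpolation. Let `F = f ^ p` have integral at
most `1`. Integrating a pointwise inequality between `F`, `W` and a parameter `s` gives
`s ^ b * ∫ f W ^ c ≤ Φ x + K * s` with `K` a constant and
`Φ x = ∫ F ^ a * min(F, W) ^ b * W ^ c`, where `a = 1 / p`, `b = 1 - 1 / q` and `a + b + c = 2`.
Choosing the best `s` at each `x` bounds the `q`-th power of `∫ f W ^ c` by a multiple of `Φ`, and
by Tonelli `Φ` has integral at most a multiple of `∫ F`.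
-/

/-- `V` lies in weak `L¹(μ)` with quasi-norm at most `B`. The distribution inequality is multiplied
out, so that it needs no exception at `t = 0` or `t = ∞`. -/
def HasWeakL1Bound {Y : Type*} [MeasurableSpace Y] (μ : Measure Y) (V : Y → ℝ≥0∞) (B : ℝ≥0∞) :
    Prop :=
  ∀ t, t * μ {y | t < V y} ≤ B

/-- The constant in the estimate of `∫ min(t, V)ᵇ Vᶜ` for `V` in weak `L¹`, obtained by cutting
the range of `V / t` at the powers of `2`. -/
noncomputable def dyadicConst (b c : ℝ) : ℝ≥0∞ :=
  2 * ∑' n : ℤ, min 1 (2 ^ n) ^ b * (2 ^ n) ^ (c - 1)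

/-- The upper half of `η`-Ahlfors regularity: balls of radius `r` have measure at most `A r ^ η`. -/
def IsUpperAhlfors {X : Type*} [MeasurableSpace X] (d : X → X → ℝ) (μ : Measure X) (η A : ℝ) :
    Prop :=
  ∀ x : X, ∀ r : ℝ, 0 < r → μ {y | d x y < r} ≤ ENNReal.ofReal (A * r ^ η)

section Exponents

variable {a b c : ℝ}

lemma le_mul_of_forall_mul_le_one {M N C : ℝ≥0∞} (hC0 : C ≠ 0) (hC : C ≠ ∞)
    (h : ∀ k ≠ ∞, k * N ≤ 1 → k * M ≤ C) : M ≤ C * N := by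
  rcases eq_or_ne N ∞ with rfl | hN
  · simp [ENNReal.mul_top hC0]
  rcases eq_or_ne N 0 with rfl | hN0
  · by_contra hM
    obtain ⟨n, hn⟩ := ENNReal.exists_nat_mul_gt (by simpa using hM) hC
    exact hn.not_ge (h n (by simp) (by simp))
  · have := h N⁻¹ (by simpa using hN0) (ENNReal.inv_mul_cancel hN0 hN).le
    rwa [mul_comm, ← div_eq_mul_inv, ENNReal.div_le_iff hN0 hN] at this

lemma rpow_neg_le_mul_rpow_neg {u v k : ℝ≥0∞} (hk0 : k ≠ 0) (hk : k ≠ ∞) (h : u ≤ k * v)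
    {s : ℝ} (hs : 0 ≤ s) : v ^ (-s) ≤ k ^ s * u ^ (-s) := by
  have hks0 : k ^ s ≠ 0 := by simp [ENNReal.rpow_eq_zero_iff, hk0, hk]
  have hks : k ^ s ≠ ∞ := ENNReal.rpow_ne_top_of_nonneg hs hk
  calc v ^ (-s) = k ^ s * ((k * v) ^ s)⁻¹ := by
        rw [ENNReal.mul_rpow_of_nonneg _ _ hs, ENNReal.mul_inv (Or.inl hks0) (Or.inl hks),
          ENNReal.mul_inv_cancel_left hks0 hks, ENNReal.rpow_neg]
    _ ≤ k ^ s * u ^ (-s) := by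
        rw [ENNReal.rpow_neg]
        gcongr

lemma tsum_two_rpow_pow_ne_top {e : ℝ} (he : e < 0) : ∑' n : ℕ, ((2 : ℝ≥0∞) ^ e) ^ n ≠ ∞ := by
  have hlt : (2 : ℝ≥0∞) ^ e < 1 := ENNReal.rpow_lt_one_of_one_lt_of_neg one_lt_two he
  rw [ENNReal.tsum_geometric]
  exact ENNReal.inv_ne_top.2 (tsub_pos_of_lt hlt).ne'

lemma dyadicConst_ne_top (hc : c < 1) (hbc : 1 < b + c) : dyadicConst b c ≠ ∞ := by
  have large (n : ℕ) : min 1 ((2 : ℝ≥0∞) ^ (n : ℤ)) ^ b * (2 ^ (n : ℤ)) ^ (c - 1)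
      = (2 ^ (c - 1)) ^ n := by
    rw [zpow_natCast, min_eq_left (one_le_pow₀ one_le_two), ENNReal.one_rpow, one_mul,
      ← ENNReal.rpow_natCast_mul, mul_comm, ENNReal.rpow_mul_natCast]
  have small (n : ℕ) : min 1 ((2 : ℝ≥0∞) ^ (-((n : ℤ) + 1))) ^ b * (2 ^ (-((n : ℤ) + 1))) ^ (c - 1)
      = (2 ^ (1 - (b + c))) * (2 ^ (1 - (b + c))) ^ n := by
    have hpow : (2 : ℝ≥0∞) ^ (-((n : ℤ) + 1)) = ((2 : ℝ≥0∞) ^ (n + 1))⁻¹ := by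
      rw [ENNReal.zpow_neg]
      norm_cast
    rw [hpow, min_eq_right (ENNReal.inv_le_one.2 (one_le_pow₀ one_le_two)),
      ← ENNReal.rpow_add _ _ (by simp) (by simp), ENNReal.inv_rpow, ← ENNReal.rpow_neg,
      ← ENNReal.rpow_natCast_mul, mul_comm, ENNReal.rpow_mul_natCast, pow_succ', ← add_sub_assoc,
      neg_sub]
  have hlarge := tsum_two_rpow_pow_ne_top (e := c - 1) (by linarith)
  have hsmall := tsum_two_rpow_pow_ne_top (e := 1 - (b + c)) (by linarith)
  rw [dyadicConst, tsum_of_nat_of_neg_add_one ENNReal.summable ENNReal.summable]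
  simp_rw [large, small, ENNReal.tsum_mul_left]
  finiteness

lemma exists_zpow_two_min_rpow_mul_rpow_le {t v : ℝ≥0∞} (hb : 0 ≤ b) (hc : 0 ≤ c) (ht0 : t ≠ 0)
    (ht : t ≠ ∞) (hv0 : v ≠ 0) (hv : v ≠ ∞) :
    ∃ n : ℤ, t * (2 ^ n / 2) < v ∧
      min t v ^ b * v ^ c ≤ t ^ (b + c) * (min 1 (2 ^ n) ^ b * (2 ^ n) ^ c) := by
  obtain ⟨n, hn_lt, hn_le⟩ := ENNReal.exists_mem_Ioc_zpow (ENNReal.div_ne_zero.2 ⟨hv0, ht⟩)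
    (ENNReal.div_ne_top hv ht0) one_lt_two ENNReal.ofNat_ne_top
  refine ⟨n + 1, ?_, ?_⟩
  · rwa [ENNReal.zpow_add two_ne_zero ENNReal.ofNat_ne_top, zpow_one,
      ENNReal.mul_div_cancel_right two_ne_zero ENNReal.ofNat_ne_top, mul_comm,
      ← ENNReal.lt_div_iff_mul_lt (Or.inl ht0) (Or.inl ht)]
  · have hv_le : v ≤ t * 2 ^ (n + 1) := by
      rwa [mul_comm, ← ENNReal.div_le_iff ht0 ht]
    have hmin : min t (t * 2 ^ (n + 1)) = t * min 1 (2 ^ (n + 1)) := by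
      rw [mul_min, mul_one]
    calc min t v ^ b * v ^ c ≤ min t (t * 2 ^ (n + 1)) ^ b * (t * 2 ^ (n + 1)) ^ c := by gcongr
      _ = t ^ (b + c) * (min 1 (2 ^ (n + 1)) ^ b * (2 ^ (n + 1)) ^ c) := by
          rw [hmin, ENNReal.mul_rpow_of_nonneg _ _ hb, ENNReal.mul_rpow_of_nonneg _ _ hc,
            mul_mul_mul_comm, ← ENNReal.rpow_add_of_nonneg _ _ hb hc]

lemma rpow_mul_zpow_two_eq {t : ℝ≥0∞} (ht0 : t ≠ 0) (ht : t ≠ ∞) (n : ℤ) :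
    t ^ (b + c) * (min 1 (2 ^ n) ^ b * (2 ^ n) ^ c) =
      t ^ (b + c - 1) * (2 * (min 1 (2 ^ n) ^ b * (2 ^ n) ^ (c - 1))) * (t * (2 ^ n / 2)) := by
  have h2n0 : (2 : ℝ≥0∞) ^ n ≠ 0 := (ENNReal.zpow_pos two_ne_zero ENNReal.ofNat_ne_top n).ne'
  have h2n : (2 : ℝ≥0∞) ^ n ≠ ∞ := (ENNReal.zpow_lt_top two_ne_zero ENNReal.ofNat_ne_top n).ne
  have lower {u : ℝ≥0∞} (hu0 : u ≠ 0) (hu : u ≠ ∞) (e : ℝ) : u ^ e = u ^ (e - 1) * u := by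
    rw [ENNReal.rpow_sub _ _ hu0 hu, ENNReal.rpow_one, ENNReal.div_mul_cancel hu0 hu]
  calc t ^ (b + c) * (min 1 (2 ^ n) ^ b * (2 ^ n) ^ c)
      = t ^ (b + c - 1) * t * (min 1 (2 ^ n) ^ b * ((2 ^ n) ^ (c - 1) * (2 * (2 ^ n / 2)))) := by
        rw [ENNReal.mul_div_cancel two_ne_zero ENNReal.ofNat_ne_top, ← lower ht0 ht,
          ← lower h2n0 h2n]
    _ = _ := by ring

lemma rpow_mul_rpow_mul_rpow_le_add (ha : a < 1) (hb : b < 1) (hc : c < 1) (habc : a + b + c = 2)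
    (u v w : ℝ≥0∞) :
    u ^ a * v ^ b * w ^ c ≤
      u * v + u ^ a * (min u w ^ b * w ^ c) + v ^ b * (min v w ^ a * w ^ c) := by
  have ha0 : 0 ≤ a := by linarith
  have hb0 : 0 ≤ b := by linarith
  have ha1 : 0 ≤ 1 - a := by linarith
  have hb1 : 0 ≤ 1 - b := by linarith
  rcases le_total w (min u v) with hw | hw
  · obtain ⟨hwu, hwv⟩ := le_min_iff.1 hw
    calc u ^ a * v ^ b * w ^ c = u ^ a * v ^ b * (w ^ (1 - a) * w ^ (1 - b)) := by
          rw [← ENNReal.rpow_add_of_nonneg _ _ ha1 hb1]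
          congr 2
          linarith
      _ ≤ u ^ a * v ^ b * (u ^ (1 - a) * v ^ (1 - b)) := by gcongr
      _ = (u ^ a * u ^ (1 - a)) * (v ^ b * v ^ (1 - b)) := by ring
      _ = u * v := by
          simp [← ENNReal.rpow_add_of_nonneg, ha0, ha1, hb0, hb1]
      _ ≤ _ := le_self_add.trans le_self_add
  · rcases le_total u v with huv | hvu
    · have hu : u ≤ min v w := le_min huv (min_eq_left huv ▸ hw)
      calc u ^ a * v ^ b * w ^ c ≤ min v w ^ a * v ^ b * w ^ c := by gcongr
        _ = v ^ b * (min v w ^ a * w ^ c) := by ring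
        _ ≤ _ := le_add_self
    · have hv : v ≤ min u w := le_min hvu (min_eq_right hvu ▸ hw)
      calc u ^ a * v ^ b * w ^ c ≤ u ^ a * min u w ^ b * w ^ c := by gcongr
        _ = u ^ a * (min u w ^ b * w ^ c) := by ring
        _ ≤ _ := le_add_self.trans le_self_add

lemma rpow_inv_one_sub_le_of_forall_rpow_mul_le {T K Φ : ℝ≥0∞} (hb0 : 0 ≤ b) (hb1 : b < 1)
    (hK1 : 1 ≤ K) (hK : K ≠ ∞) (h : ∀ s ≠ ∞, s ^ b * T ≤ Φ + K * s) :
    T ^ (1 - b)⁻¹ ≤ (2 * K) ^ (1 - b)⁻¹ * Φ := by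
  have hb : 0 < 1 - b := by linarith
  have hK0 : K ≠ 0 := (zero_lt_one.trans_le hK1).ne'
  have h2K0 : 2 * K ≠ 0 := by simp [hK0]
  have h2K : 2 * K ≠ ∞ := by finiteness
  rcases eq_or_ne T ∞ with rfl | hT
  · have hΦ : Φ = ∞ := by simpa [hK] using h 1 (by simp)
    simp [hΦ, ENNReal.mul_top, hK0, hK, ENNReal.mul_eq_top]
  -- At this `s` the left-hand side of `h` is twice the term `K * s`, which can then be absorbed.
  set s := (T / (2 * K)) ^ (1 - b)⁻¹ with hs
  have hs_top : s ≠ ∞ := ENNReal.rpow_ne_top_of_nonneg (by positivity) (ENNReal.div_ne_top hT h2K0)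
  have hsT : s ^ b * T = K * s + K * s := by
    have hs_pow : s ^ (1 - b) = T / (2 * K) := ENNReal.rpow_inv_rpow hb.ne' _
    calc s ^ b * T = 2 * K * (s ^ b * s ^ (1 - b)) := by
          rw [hs_pow, mul_left_comm, ENNReal.mul_div_cancel h2K0 h2K]
      _ = K * s + K * s := by
          rw [← ENNReal.rpow_add_of_nonneg _ _ hb0 hb.le, add_sub_cancel, ENNReal.rpow_one]
          ring
  have hKs : K * s ≤ Φ := by
    have := hsT ▸ h s hs_top
    exact (ENNReal.add_le_add_iff_right (by finiteness)).1 this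
  calc T ^ (1 - b)⁻¹ = (2 * K) ^ (1 - b)⁻¹ * s := by
        rw [hs, ← ENNReal.mul_rpow_of_nonneg _ _ (by positivity), ENNReal.mul_div_cancel h2K0 h2K]
    _ ≤ (2 * K) ^ (1 - b)⁻¹ * Φ := by
        gcongr
        exact (le_mul_of_one_le_left' hK1).trans hKs

end Exponents

namespace HasWeakL1Bound

variable {Y : Type*} [MeasurableSpace Y] {ν : Measure Y} {V : Y → ℝ≥0∞} {B : ℝ≥0∞} {a b c : ℝ}

lemma ae_ne_top (hV : HasWeakL1Bound ν V B) (hB : B ≠ ∞) : ∀ᵐ y ∂ν, V y ≠ ∞ := by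
  rw [ae_iff]
  by_contra hpos
  obtain ⟨n, hn⟩ := ENNReal.exists_nat_mul_gt hpos hB
  refine (hn.trans_le ?_).not_ge (hV n)
  gcongr with y
  intro hy
  simp [not_not.1 hy]

lemma lintegral_min_rpow_mul_rpow_le (hV : HasWeakL1Bound ν V B) (hVm : Measurable V) (hB : B ≠ ∞)
    (hb : 0 < b) (hc : 0 < c) {t : ℝ≥0∞} (ht : t ≠ ∞) :
    ∫⁻ y, min t (V y) ^ b * V y ^ c ∂ν ≤ dyadicConst b c * B * t ^ (b + c - 1) := by
  rcases eq_or_ne t 0 with rfl | ht0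
  · simp [hb]
  let level (n : ℤ) : Set Y := {y | t * (2 ^ n / 2) < V y}
  let height (n : ℤ) : ℝ≥0∞ := t ^ (b + c) * (min 1 (2 ^ n) ^ b * (2 ^ n) ^ c)
  have pointwise : ∀ᵐ y ∂ν, min t (V y) ^ b * V y ^ c ≤
      ∑' n : ℤ, (level n).indicator (fun _ => height n) y := by
    filter_upwards [hV.ae_ne_top hB] with y hy
    rcases eq_or_ne (V y) 0 with h0 | h0
    · simp [h0, hc]
    obtain ⟨n, hn, hle⟩ := exists_zpow_two_min_rpow_mul_rpow_le hb.le hc.le ht0 ht h0 hy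
    have hmem : y ∈ level n := hn
    calc min t (V y) ^ b * V y ^ c ≤ height n := hle
      _ = (level n).indicator (fun _ => height n) y := by rw [Set.indicator_of_mem hmem]
      _ ≤ _ := ENNReal.le_tsum (f := fun m => (level m).indicator (fun _ => height m) y) n
  have height_mul_measure_le (n : ℤ) : height n * ν (level n) ≤
      B * t ^ (b + c - 1) * (2 * (min 1 (2 ^ n) ^ b * (2 ^ n) ^ (c - 1))) := by
    calc height n * ν (level n)
        = t ^ (b + c - 1) * (2 * (min 1 (2 ^ n) ^ b * (2 ^ n) ^ (c - 1))) *
            (t * (2 ^ n / 2) * ν (level n)) := by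
          rw [← mul_assoc, ← rpow_mul_zpow_two_eq ht0 ht]
      _ ≤ t ^ (b + c - 1) * (2 * (min 1 (2 ^ n) ^ b * (2 ^ n) ^ (c - 1))) * B := by
          gcongr
          exact hV _
      _ = _ := by ring
  have level_meas (n : ℤ) : MeasurableSet (level n) := measurableSet_lt measurable_const hVm
  calc ∫⁻ y, min t (V y) ^ b * V y ^ c ∂ν
      ≤ ∫⁻ y, ∑' n : ℤ, (level n).indicator (fun _ => height n) y ∂ν := lintegral_mono_ae pointwise
    _ = ∑' n : ℤ, height n * ν (level n) := by
        rw [lintegral_tsum fun n => (measurable_const.indicator (level_meas n)).aemeasurable]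
        simp_rw [lintegral_indicator_const (level_meas _)]
    _ ≤ ∑' n : ℤ, B * t ^ (b + c - 1) * (2 * (min 1 (2 ^ n) ^ b * (2 ^ n) ^ (c - 1))) :=
        ENNReal.tsum_le_tsum height_mul_measure_le
    _ = dyadicConst b c * B * t ^ (b + c - 1) := by
        rw [ENNReal.tsum_mul_left, ENNReal.tsum_mul_left, dyadicConst]
        ring

lemma rpow_mul_lintegral_le (hV : HasWeakL1Bound ν V B) (hVm : Measurable V) (hB : B ≠ ∞)
    (ha : a < 1) (hb : b < 1) (hc : c < 1) (habc : a + b + c = 2) {F : Y → ℝ≥0∞}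
    (hFm : Measurable F) (hF : ∫⁻ y, F y ∂ν ≤ 1) {s : ℝ≥0∞} (hs : s ≠ ∞) :
    s ^ b * ∫⁻ y, F y ^ a * V y ^ c ∂ν ≤
      ∫⁻ y, F y ^ a * (min (F y) (V y) ^ b * V y ^ c) ∂ν + (1 + dyadicConst a c * B) * s := by
  calc s ^ b * ∫⁻ y, F y ^ a * V y ^ c ∂ν = ∫⁻ y, F y ^ a * s ^ b * V y ^ c ∂ν := by
        rw [← lintegral_const_mul _ (by fun_prop)]
        congr with y
        ring
    _ ≤ ∫⁻ y, F y * s + F y ^ a * (min (F y) (V y) ^ b * V y ^ c) +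
          s ^ b * (min s (V y) ^ a * V y ^ c) ∂ν :=
        lintegral_mono fun y => rpow_mul_rpow_mul_rpow_le_add ha hb hc habc _ _ _
    _ = (∫⁻ y, F y ∂ν) * s + ∫⁻ y, F y ^ a * (min (F y) (V y) ^ b * V y ^ c) ∂ν +
          s ^ b * ∫⁻ y, min s (V y) ^ a * V y ^ c ∂ν := by
        rw [lintegral_add_left (by fun_prop), lintegral_add_left (by fun_prop),
          lintegral_mul_const _ hFm, lintegral_const_mul _ (by fun_prop)]
    _ ≤ 1 * s + ∫⁻ y, F y ^ a * (min (F y) (V y) ^ b * V y ^ c) ∂ν +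
          s ^ b * (dyadicConst a c * B * s ^ (a + c - 1)) := by
        gcongr
        exact hV.lintegral_min_rpow_mul_rpow_le hVm hB (by linarith) (by linarith) hs
    _ = _ := by
        have hpow : s ^ b * s ^ (a + c - 1) = s := by
          rw [← ENNReal.rpow_add_of_nonneg _ _ (by linarith) (by linarith),
            show b + (a + c - 1) = 1 by linarith, ENNReal.rpow_one]
        rw [mul_left_comm (s ^ b), hpow]
        ring

lemma lintegral_rpow_inv_one_sub_le (hV : HasWeakL1Bound ν V B) (hVm : Measurable V) (hB : B ≠ ∞)
    (ha : a < 1) (hb : b < 1) (hc : c < 1) (habc : a + b + c = 2) {F : Y → ℝ≥0∞}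
    (hFm : Measurable F) (hF : ∫⁻ y, F y ∂ν ≤ 1) :
    (∫⁻ y, F y ^ a * V y ^ c ∂ν) ^ (1 - b)⁻¹ ≤ (2 * (1 + dyadicConst a c * B)) ^ (1 - b)⁻¹ *
      ∫⁻ y, F y ^ a * (min (F y) (V y) ^ b * V y ^ c) ∂ν := by
  have hD : dyadicConst a c ≠ ∞ := dyadicConst_ne_top hc (by linarith)
  exact rpow_inv_one_sub_le_of_forall_rpow_mul_le (by linarith) hb le_self_add (by finiteness)
    fun s hs => hV.rpow_mul_lintegral_le hVm hB ha hb hc habc hFm hF hs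

end HasWeakL1Bound

section LpNorm

variable {X : Type*} [MeasurableSpace X] {μ : Measure X} {p q r : ℝ} {f g : X → ℝ≥0∞}

lemma lpNorm_le_lpNorm (hp : 0 ≤ p) (h : ∀ x, f x ≤ g x) :
    lpNorm μ p f ≤ lpNorm μ p g := by
  unfold _root_.lpNorm
  gcongr
  exact h _

lemma lpNorm_const_mul {k : ℝ≥0∞} (hp : 0 < p) (hk : k ≠ ∞) :
    lpNorm μ p (fun x => k * f x) = k * lpNorm μ p f := by
  unfold _root_.lpNorm
  simp_rw [ENNReal.mul_rpow_of_nonneg _ _ hp.le]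
  rw [lintegral_const_mul' _ _ (ENNReal.rpow_ne_top_of_nonneg hp.le hk),
    ENNReal.mul_rpow_of_nonneg _ _ (by positivity), one_div, ENNReal.rpow_rpow_inv hp.ne']

lemma lpNorm_mul_le (hp : 0 < p) (hq : 0 < q) (hr : 0 < r) (hpqr : 1 / r = 1 / p + 1 / q)
    (hf : AEMeasurable f μ) (hg : AEMeasurable g μ) :
    lpNorm μ r (fun x => f x * g x) ≤ lpNorm μ p f * lpNorm μ q g := by
  have hrp : r < p := lt_of_one_div_lt_one_div hp (by linarith [one_div_pos.2 hq])
  exact ENNReal.lintegral_Lp_mul_le_Lq_mul_Lr hr hrp hpqr μ hf hg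

end LpNorm

section WeakKernel

variable {X Y : Type*} [MeasurableSpace X] [MeasurableSpace Y] {μ : Measure X} {ν : Measure Y}
  [SFinite μ] [SFinite ν] {W : X → Y → ℝ≥0∞} {B : ℝ≥0∞} {a b c p q : ℝ}

lemma lintegral_lintegral_min_rpow_le (hW : Measurable (Function.uncurry W))
    (hWy : ∀ y, HasWeakL1Bound μ (fun x => W x y) B) (hB : B ≠ ∞)
    (ha : a < 1) (hb : b < 1) (hc : c < 1) (habc : a + b + c = 2) {F : Y → ℝ≥0∞}
    (hFm : Measurable F) (hF : ∫⁻ y, F y ∂ν ≤ 1) :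
    ∫⁻ x, ∫⁻ y, F y ^ a * (min (F y) (W x y) ^ b * W x y ^ c) ∂ν ∂μ ≤ dyadicConst b c * B := by
  have hF_top : ∀ᵐ y ∂ν, F y < ∞ := ae_lt_top hFm (hF.trans_lt ENNReal.one_lt_top).ne
  have hWm (y : Y) : Measurable fun x => W x y := hW.of_uncurry_right
  have hmeas : Measurable fun z : X × Y =>
      F z.2 ^ a * (min (F z.2) (W z.1 z.2) ^ b * W z.1 z.2 ^ c) := by
    have hW' : Measurable fun z : X × Y => W z.1 z.2 := hW
    fun_prop
  calc ∫⁻ x, ∫⁻ y, F y ^ a * (min (F y) (W x y) ^ b * W x y ^ c) ∂ν ∂μ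
      = ∫⁻ y, F y ^ a * ∫⁻ x, min (F y) (W x y) ^ b * W x y ^ c ∂μ ∂ν := by
        rw [lintegral_lintegral_swap hmeas.aemeasurable]
        congr with y
        exact lintegral_const_mul _ (((measurable_const.min (hWm y)).pow_const b).mul
          ((hWm y).pow_const c))
    _ ≤ ∫⁻ y, dyadicConst b c * B * F y ∂ν := by
        refine lintegral_mono_ae ?_
        filter_upwards [hF_top] with y hy
        calc F y ^ a * ∫⁻ x, min (F y) (W x y) ^ b * W x y ^ c ∂μ
            ≤ F y ^ a * (dyadicConst b c * B * F y ^ (b + c - 1)) := by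
              gcongr
              exact (hWy y).lintegral_min_rpow_mul_rpow_le (hWm y) hB (by linarith) (by linarith)
                hy.ne
          _ = dyadicConst b c * B * F y := by
              rw [mul_left_comm, ← ENNReal.rpow_add_of_nonneg _ _ (by linarith) (by linarith),
                show a + (b + c - 1) = 1 by linarith, ENNReal.rpow_one]
    _ = dyadicConst b c * B * ∫⁻ y, F y ∂ν := lintegral_const_mul _ hFm
    _ ≤ dyadicConst b c * B := mul_le_of_le_one_right' hF

lemma lintegral_lintegral_mul_rpow_rpow_le (hW : Measurable (Function.uncurry W))
    (hWx : ∀ x, HasWeakL1Bound ν (W x) B) (hWy : ∀ y, HasWeakL1Bound μ (fun x => W x y) B)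
    (hB : B ≠ ∞) (ha : a < 1) (hb : b < 1) (hc : c < 1) (habc : a + b + c = 2) {F : Y → ℝ≥0∞}
    (hFm : Measurable F) (hF : ∫⁻ y, F y ∂ν ≤ 1) :
    ∫⁻ x, (∫⁻ y, F y ^ a * W x y ^ c ∂ν) ^ (1 - b)⁻¹ ∂μ ≤
      (2 * (1 + dyadicConst a c * B)) ^ (1 - b)⁻¹ * (dyadicConst b c * B) := by
  have hD : dyadicConst a c ≠ ∞ := dyadicConst_ne_top hc (by linarith)
  have hb' : 0 ≤ (1 - b)⁻¹ := inv_nonneg.2 (by linarith)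
  calc ∫⁻ x, (∫⁻ y, F y ^ a * W x y ^ c ∂ν) ^ (1 - b)⁻¹ ∂μ
      ≤ ∫⁻ x, (2 * (1 + dyadicConst a c * B)) ^ (1 - b)⁻¹ *
          ∫⁻ y, F y ^ a * (min (F y) (W x y) ^ b * W x y ^ c) ∂ν ∂μ :=
        lintegral_mono fun x => (hWx x).lintegral_rpow_inv_one_sub_le hW.of_uncurry_left hB
          ha hb hc habc hFm hF
    _ ≤ (2 * (1 + dyadicConst a c * B)) ^ (1 - b)⁻¹ * (dyadicConst b c * B) := by
        rw [lintegral_const_mul' _ _ (ENNReal.rpow_ne_top_of_nonneg hb' (by finiteness))]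
        gcongr
        exact lintegral_lintegral_min_rpow_le hW hWy hB ha hb hc habc hFm hF

lemma exists_lpNorm_lintegral_mul_rpow_le (hW : Measurable (Function.uncurry W))
    (hWx : ∀ x, HasWeakL1Bound ν (W x) B) (hWy : ∀ y, HasWeakL1Bound μ (fun x => W x y) B)
    (hB : B ≠ ∞) (hp : 1 < p) (hq : 0 < q) (hc : c < 1) (hpq : 1 / p + c = 1 + 1 / q) :
    ∃ C ≠ ∞, ∀ f : Y → ℝ≥0∞, Measurable f →
      lpNorm μ q (fun x => ∫⁻ y, f y * W x y ^ c ∂ν) ≤ C * lpNorm ν p f := by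
  have hp0 : 0 < p := by linarith
  have ha : p⁻¹ < 1 := inv_lt_one_of_one_lt₀ hp
  have hb : 1 - q⁻¹ < 1 := by linarith [inv_pos.2 hq]
  have habc : p⁻¹ + (1 - q⁻¹) + c = 2 := by rw [one_div, one_div] at hpq; linarith
  let K := (2 * (1 + dyadicConst p⁻¹ c * B)) ^ q * (dyadicConst (1 - q⁻¹) c * B)
  have hK : K ≠ ∞ := by
    have hD : dyadicConst p⁻¹ c ≠ ∞ := dyadicConst_ne_top hc (by linarith)
    have hE : dyadicConst (1 - q⁻¹) c ≠ ∞ := dyadicConst_ne_top hc (by linarith)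
    exact ENNReal.mul_ne_top (ENNReal.rpow_ne_top_of_nonneg hq.le (by finiteness)) (by finiteness)
  let C := K ^ q⁻¹ + 1
  have hC : C ≠ ∞ := by
    simpa [C] using ENNReal.rpow_ne_top_of_nonneg (inv_nonneg.2 hq.le) hK
  have normalized (f : Y → ℝ≥0∞) (hf : Measurable f) (hf1 : lpNorm ν p f ≤ 1) :
      lpNorm μ q (fun x => ∫⁻ y, f y * W x y ^ c ∂ν) ≤ C := by
    have hF : ∫⁻ y, f y ^ p ∂ν ≤ 1 := by
      rwa [_root_.lpNorm, one_div, ENNReal.rpow_inv_le_iff hp0, ENNReal.one_rpow] at hf1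
    refine le_trans ?_ le_self_add
    rw [_root_.lpNorm, one_div]
    gcongr
    simpa only [ENNReal.rpow_rpow_inv hp0.ne', _root_.sub_sub_cancel, inv_inv] using
      lintegral_lintegral_mul_rpow_rpow_le hW hWx hWy hB ha hb hc habc (hf.pow_const p) hF
  refine ⟨C, hC, fun f hf => le_mul_of_forall_mul_le_one (by simp [C]) hC fun k hk hkf => ?_⟩
  rw [← lpNorm_const_mul hp0 hk] at hkf
  rw [← lpNorm_const_mul hq hk]
  simpa only [mul_assoc, lintegral_const_mul' _ _ hk] using normalized _ (hf.const_mul k) hkf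

end WeakKernel

section FractionalIntegral

variable {X : Type*} [MeasurableSpace X] {d : X → X → ℝ} {μ : Measure X} {η A β p q : ℝ}

lemma IsUpperAhlfors.sigmaFinite (hμ : IsUpperAhlfors d μ η A) : SigmaFinite μ := by
  rcases isEmpty_or_nonempty X with _ | ⟨⟨x⟩⟩
  · rw [Measure.eq_zero_of_isEmpty μ]
    infer_instance
  · refine ⟨⟨⟨fun n => {y | d x y < n + 1}, fun _ => trivial, fun n => ?_, ?_⟩⟩⟩
    · exact (hμ x (n + 1) (by positivity)).trans_lt ENNReal.ofReal_lt_top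
    · refine Set.iUnion_eq_univ_iff.2 fun y => ?_
      obtain ⟨n, hn⟩ := exists_nat_gt (d x y)
      exact ⟨n, hn.trans (lt_add_one _)⟩

lemma IsUpperAhlfors.hasWeakL1Bound_rpow_neg (hμ : IsUpperAhlfors d μ η A) (hη : 0 < η) (x : X) :
    HasWeakL1Bound μ (fun y => ENNReal.ofReal (d x y) ^ (-η)) (ENNReal.ofReal A) := by
  intro t
  rcases eq_or_ne t 0 with rfl | ht0
  · simp
  rcases eq_or_ne t ∞ with rfl | ht
  · simp
  lift t to NNReal using ht
  have hpos : (0 : ℝ) < t := by exact_mod_cast pos_iff_ne_zero.2 ht0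
  have hsub : {y | (t : ℝ≥0∞) < ENNReal.ofReal (d x y) ^ (-η)} ⊆
      {y | d x y < (t : ℝ) ^ (-η⁻¹)} := by
    intro y hy
    by_contra hle
    have hle' : (t : ℝ≥0∞) ^ (-η⁻¹) ≤ ENNReal.ofReal (d x y) := by
      rw [← ENNReal.ofReal_coe_nnreal, ENNReal.ofReal_rpow_of_pos hpos]
      exact ENNReal.ofReal_le_ofReal (not_lt.1 hle)
    refine (Set.mem_ofPred_eq ▸ hy).not_ge ?_
    rw [ENNReal.rpow_neg, ENNReal.inv_le_iff_inv_le]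
    rwa [ENNReal.rpow_neg, ← ENNReal.inv_rpow, ENNReal.rpow_inv_le_iff hη] at hle'
  calc (t : ℝ≥0∞) * μ {y | (t : ℝ≥0∞) < ENNReal.ofReal (d x y) ^ (-η)}
      ≤ t * ENNReal.ofReal (A * ((t : ℝ) ^ (-η⁻¹)) ^ η) := by
        gcongr
        exact (measure_mono hsub).trans (hμ x _ (by positivity))
    _ = ENNReal.ofReal A := by
        rw [← ENNReal.ofReal_coe_nnreal, ← ENNReal.ofReal_mul hpos.le, ← Real.rpow_mul hpos.le,
          neg_mul, inv_mul_cancel₀ hη.ne', Real.rpow_neg_one]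
        congr 1
        field_simp

lemma measurable_fracInt [SFinite μ] (hd : Measurable fun z : X × X => d z.1 z.2)
    {f : X → ℝ≥0∞} (hf : Measurable f) : Measurable (fracInt d μ β η f) :=
  Measurable.lintegral_prod_right' (f := fun z : X × X =>
    f z.2 * ENNReal.ofReal (d z.1 z.2) ^ (β - η)) (by fun_prop)

lemma exists_lpNorm_fracInt_le (hsymm : ∀ x y, d x y = d y x)
    (hd : Measurable fun z : X × X => d z.1 z.2) (hμ : IsUpperAhlfors d μ η A) (hη : 0 < η)
    (hβ : 0 < β) (hp : 1 < p) (hq : 0 < q) (hpq : 1 / q = 1 / p - β / η) :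
    ∃ C ≠ ∞, ∀ f : X → ℝ≥0∞, Measurable f →
      lpNorm μ q (fracInt d μ β η f) ≤ C * lpNorm μ p f := by
  have := hμ.sigmaFinite
  have hkernel (x y : X) : ENNReal.ofReal (d x y) ^ (β - η) =
      (ENNReal.ofReal (d x y) ^ (-η)) ^ (1 - β / η) := by
    rw [← ENNReal.rpow_mul]
    congr 1
    field_simp
    ring
  have hWx := hμ.hasWeakL1Bound_rpow_neg hη
  have hWy (y : X) : HasWeakL1Bound μ (fun x => ENNReal.ofReal (d x y) ^ (-η))
      (ENNReal.ofReal A) := by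
    simpa only [hsymm _ y] using hWx y
  have hc : 1 - β / η < 1 := by linarith [div_pos hβ hη]
  have hfrac (f : X → ℝ≥0∞) : fracInt d μ β η f =
      fun x => ∫⁻ y, f y * (ENNReal.ofReal (d x y) ^ (-η)) ^ (1 - β / η) ∂μ := by
    funext x
    simp only [fracInt, hkernel]
  simp only [hfrac]
  exact exists_lpNorm_lintegral_mul_rpow_le (hd.ennreal_ofReal.pow_const (-η)) hWx hWy
    ENNReal.ofReal_ne_top hp hq hc (by linarith)

end FractionalIntegral

section Hypermetric

variable {X : Type*} {d : X → X → ℝ} {κ : ℝ}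

lemma hyperRho_right_comm (x y z : X) : hyperRho d x y z = hyperRho d x z y := by
  simp only [hyperRho, max_comm]

lemma le_two_mul_hyperRho (hκ : 0 < κ) (hsymm : ∀ x y, d x y = d y x)
    (htri : ∀ x y z, d x z ≤ κ * (d x y + d y z)) (x y z : X) :
    d x y ≤ 2 * κ * hyperRho d x y z := by
  have : Nonempty X := ⟨x⟩
  rw [← div_le_iff₀' (by positivity)]
  refine le_ciInf fun u => ?_
  rw [div_le_iff₀' (by positivity)]
  set m := max (d x u) (max (d y u) (d z u))
  have hx : d x u ≤ m := le_max_left _ _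
  have hy : d y u ≤ m := (le_max_left _ _).trans (le_max_right _ _)
  calc d x y ≤ κ * (d x u + d y u) := hsymm y u ▸ htri x u y
    _ ≤ κ * (m + m) := by gcongr
    _ = 2 * κ * m := by ring

lemma ofReal_hyperRho_rpow_neg_le (hκ : 0 < κ) (hsymm : ∀ x y, d x y = d y x)
    (htri : ∀ x y z, d x z ≤ κ * (d x y + d y z)) {s : ℝ} (hs : 0 ≤ s) (x y z : X) :
    ENNReal.ofReal (hyperRho d x y z) ^ (-s) ≤
      ENNReal.ofReal (2 * κ) ^ s * ENNReal.ofReal (d x y) ^ (-s) := by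
  refine rpow_neg_le_mul_rpow_neg (by simpa using hκ) ENNReal.ofReal_ne_top ?_ hs
  rw [← ENNReal.ofReal_mul (by positivity)]
  exact ENNReal.ofReal_le_ofReal (le_two_mul_hyperRho hκ hsymm htri x y z)

lemma ofReal_hyperRho_rpow_neg_le_mul (hκ : 0 < κ) (hsymm : ∀ x y, d x y = d y x)
    (htri : ∀ x y z, d x z ≤ κ * (d x y + d y z)) {γ η β₁ β₂ : ℝ} (hβ₁ : β₁ ≤ η) (hβ₂ : β₂ ≤ η)
    (hγ : β₁ + β₂ = 2 * η - γ) (x y z : X) :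
    ENNReal.ofReal (hyperRho d x y z) ^ (-γ) ≤ ENNReal.ofReal (2 * κ) ^ γ *
      (ENNReal.ofReal (d x y) ^ (β₁ - η) * ENNReal.ofReal (d x z) ^ (β₂ - η)) := by
  have hk0 : ENNReal.ofReal (2 * κ) ≠ 0 := by simpa using hκ
  have hy := ofReal_hyperRho_rpow_neg_le hκ hsymm htri (sub_nonneg.2 hβ₁) x y z
  have hz := ofReal_hyperRho_rpow_neg_le hκ hsymm htri (sub_nonneg.2 hβ₂) x z y
  rw [neg_sub] at hy
  rw [← hyperRho_right_comm, neg_sub] at hz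
  have hsplit : γ = (η - β₁) + (η - β₂) := by linarith
  calc ENNReal.ofReal (hyperRho d x y z) ^ (-γ)
      = ENNReal.ofReal (hyperRho d x y z) ^ (β₁ - η) *
          ENNReal.ofReal (hyperRho d x y z) ^ (β₂ - η) := by
        rw [← neg_sub η β₁, ← neg_sub η β₂]
        simp only [ENNReal.rpow_neg, ← ENNReal.inv_rpow]
        rw [← ENNReal.rpow_add_of_nonneg _ _ (by linarith) (by linarith), ← hsplit]
    _ ≤ _ := mul_le_mul' hy hz
    _ = _ := by
        rw [mul_mul_mul_comm, ← ENNReal.rpow_add _ _ hk0 ENNReal.ofReal_ne_top, ← hsplit]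

lemma Tgamma_le_mul_fracInt [MeasurableSpace X] {μ : Measure X} (hκ : 0 < κ)
    (hsymm : ∀ x y, d x y = d y x) (htri : ∀ x y z, d x z ≤ κ * (d x y + d y z))
    (hd : Measurable fun z : X × X => d z.1 z.2) {γ η β₁ β₂ : ℝ} (hβ₁ : β₁ ≤ η) (hβ₂ : β₂ ≤ η)
    (hγ : β₁ + β₂ = 2 * η - γ) {f g : X → ℝ≥0∞} (hf : Measurable f) (hg : Measurable g) (x : X) :
    Tgamma d μ γ f g x ≤
      ENNReal.ofReal (2 * κ) ^ γ * (fracInt d μ β₁ η f x * fracInt d μ β₂ η g x) := by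
  have hdx : Measurable (d x) := hd.of_uncurry_left
  set k := ENNReal.ofReal (2 * κ)
  calc Tgamma d μ γ f g x
      ≤ ∫⁻ y, ∫⁻ z, k ^ γ * (f y * ENNReal.ofReal (d x y) ^ (β₁ - η)) *
          (g z * ENNReal.ofReal (d x z) ^ (β₂ - η)) ∂μ ∂μ := by
        refine lintegral_mono fun y => lintegral_mono fun z => ?_
        calc f y * g z * ENNReal.ofReal (hyperRho d x y z) ^ (-γ)
            ≤ f y * g z * (k ^ γ * (ENNReal.ofReal (d x y) ^ (β₁ - η) *
                ENNReal.ofReal (d x z) ^ (β₂ - η))) :=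
              mul_le_mul_right (ofReal_hyperRho_rpow_neg_le_mul hκ hsymm htri hβ₁ hβ₂ hγ x y z) _
          _ = _ := by ring
    _ = k ^ γ * (fracInt d μ β₁ η f x * fracInt d μ β₂ η g x) := by
        simp_rw [lintegral_const_mul _ (show Measurable fun z =>
          g z * ENNReal.ofReal (d x z) ^ (β₂ - η) by fun_prop)]
        rw [lintegral_mul_const _ (by fun_prop), lintegral_const_mul _ (by fun_prop), mul_assoc]
        rfl

lemma lpNorm_Tgamma_le_mul [MeasurableSpace X] {μ : Measure X} [SFinite μ] (hκ : 0 < κ)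
    (hsymm : ∀ x y, d x y = d y x) (htri : ∀ x y z, d x z ≤ κ * (d x y + d y z))
    (hd : Measurable fun z : X × X => d z.1 z.2) {γ η β₁ β₂ p q r : ℝ} (hβ₁ : β₁ ≤ η) (hβ₂ : β₂ ≤ η)
    (hγ : β₁ + β₂ = 2 * η - γ) (hp : 0 < p) (hq : 0 < q) (hr : 0 < r) (hpqr : 1 / r = 1 / p + 1 / q)
    {f g : X → ℝ≥0∞} (hf : Measurable f) (hg : Measurable g) :
    lpNorm μ r (Tgamma d μ γ f g) ≤ ENNReal.ofReal (2 * κ) ^ γ *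
      (lpNorm μ p (fracInt d μ β₁ η f) * lpNorm μ q (fracInt d μ β₂ η g)) := by
  have hκγ : ENNReal.ofReal (2 * κ) ^ γ ≠ ∞ :=
    ENNReal.rpow_ne_top_of_ne_zero (by simpa using hκ) ENNReal.ofReal_ne_top
  calc lpNorm μ r (Tgamma d μ γ f g)
      ≤ ENNReal.ofReal (2 * κ) ^ γ *
          lpNorm μ r (fun x => fracInt d μ β₁ η f x * fracInt d μ β₂ η g x) := by
        rw [← lpNorm_const_mul hr hκγ]
        exact lpNorm_le_lpNorm hr.le (Tgamma_le_mul_fracInt hκ hsymm htri hd hβ₁ hβ₂ hγ hf hg)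
    _ ≤ _ := by
        gcongr
        exact lpNorm_mul_le hp hq hr hpqr (measurable_fracInt hd hf).aemeasurable
          (measurable_fracInt hd hg).aemeasurable

end Hypermetric

lemma exists_fracInt_exponents {γ η p₁ p₂ p₃ : ℝ} (hη : 0 < η) (hγ : γ < 2 * η) (hp₁ : 1 < p₁)
    (hp₂ : 1 < p₂) (hp₃pos : 0 < 1 / p₃)
    (hp₃ : 1 / p₃ = 1 / p₁ + 1 / p₂ - (2 * η - γ) / η) :
    ∃ β₁ β₂ q₁ q₂ : ℝ, (0 < β₁ ∧ β₁ < η ∧ 0 < q₁ ∧ 1 / q₁ = 1 / p₁ - β₁ / η) ∧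
      (0 < β₂ ∧ β₂ < η ∧ 0 < q₂ ∧ 1 / q₂ = 1 / p₂ - β₂ / η) ∧
      β₁ + β₂ = 2 * η - γ ∧ 1 / p₃ = 1 / q₁ + 1 / q₂ := by
  set σ := 1 / p₁ + 1 / p₂
  have hσ : 0 < σ := by positivity
  -- Reducing both `1 / pᵢ` by the same factor keeps them positive.
  set θ := (2 * η - γ) / η / σ
  have hθ0 : 0 < θ := div_pos (div_pos (by linarith) hη) hσ
  have hθ1 : θ < 1 := (div_lt_one hσ).2 (by linarith)
  have hθσ : θ * σ = (2 * η - γ) / η := div_mul_cancel₀ _ hσ.ne'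
  have single {p : ℝ} (hp : 1 < p) : 0 < η * θ / p ∧ η * θ / p < η ∧ 0 < p / (1 - θ) ∧
      1 / (p / (1 - θ)) = 1 / p - η * θ / p / η := by
    have hp0 : 0 < p := by linarith
    refine ⟨by positivity, ?_, div_pos hp0 (by linarith), by field_simp⟩
    rw [div_lt_iff₀ hp0]
    gcongr
    linarith
  refine ⟨_, _, _, _, single hp₁, single hp₂, ?_, ?_⟩
  · have : η * (θ * σ) = 2 * η - γ := by rw [hθσ]; field_simp
    rw [← this]
    ring
  · rw [hp₃, ← hθσ]
    simp only [one_div_div]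
    ring

theorem statement0_general {X : Type*} [MeasurableSpace X] {d : X → X → ℝ} {κ : ℝ} (hκ : 0 < κ)
    (hsymm : ∀ x y, d x y = d y x) (htri : ∀ x y z, d x z ≤ κ * (d x y + d y z))
    (hd_meas : Measurable fun p : X × X => d p.1 p.2) {μ : Measure X} {η A : ℝ} (hη : 0 < η)
    (hμ : IsUpperAhlfors d μ η A) {γ p₁ p₂ p₃ : ℝ} (hγ : γ < 2 * η) (hp₁ : 1 < p₁) (hp₂ : 1 < p₂)
    (hp₃pos : 0 < 1 / p₃) (hp₃ : 1 / p₃ = 1 / p₁ + 1 / p₂ - (2 * η - γ) / η) :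
    ∃ C : ℝ, 0 < C ∧ ∀ f g : X → ℝ≥0∞, Measurable f → Measurable g →
      lpNorm μ p₃ (Tgamma d μ γ f g) ≤
        ENNReal.ofReal C * lpNorm μ p₁ f * lpNorm μ p₂ g := by
  have := hμ.sigmaFinite
  obtain ⟨β₁, β₂, q₁, q₂, ⟨hβ₁, hβ₁η, hq₁, hpq₁⟩, ⟨hβ₂, hβ₂η, hq₂, hpq₂⟩, hβ, hq⟩ :=
    exists_fracInt_exponents hη hγ hp₁ hp₂ hp₃pos hp₃
  obtain ⟨C₁, hC₁, bound₁⟩ := exists_lpNorm_fracInt_le hsymm hd_meas hμ hη hβ₁ hp₁ hq₁ hpq₁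
  obtain ⟨C₂, hC₂, bound₂⟩ := exists_lpNorm_fracInt_le hsymm hd_meas hμ hη hβ₂ hp₂ hq₂ hpq₂
  set k := ENNReal.ofReal (2 * κ) ^ γ
  have hk : k ≠ ∞ := ENNReal.rpow_ne_top_of_ne_zero (by simpa using hκ) ENNReal.ofReal_ne_top
  have hC : k * (C₁ * C₂) ≤ ENNReal.ofReal ((k * (C₁ * C₂)).toReal + 1) :=
    (ENNReal.le_ofReal_iff_toReal_le (by finiteness) (by positivity)).2 (lt_add_one _).le
  refine ⟨(k * (C₁ * C₂)).toReal + 1, by positivity, fun f g hf hg => ?_⟩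
  calc lpNorm μ p₃ (Tgamma d μ γ f g)
      ≤ k * (lpNorm μ q₁ (fracInt d μ β₁ η f) * lpNorm μ q₂ (fracInt d μ β₂ η g)) :=
        lpNorm_Tgamma_le_mul hκ hsymm htri hd_meas hβ₁η.le hβ₂η.le hβ hq₁ hq₂
          (one_div_pos.1 hp₃pos) hq hf hg
    _ ≤ k * ((C₁ * lpNorm μ p₁ f) * (C₂ * lpNorm μ p₂ g)) := by
        gcongr
        exacts [bound₁ f hf, bound₂ g hg]
    _ = k * (C₁ * C₂) * lpNorm μ p₁ f * lpNorm μ p₂ g := by ring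
    _ ≤ _ := by gcongr

/-- Boundedness of the bilinear fractional integral operator `T^γ` induced by the
third order hypermetric on an `η`-Ahlfors regular quasi-metric measure space. -/
theorem statement0 {X : Type*} [MeasurableSpace X]
    (d : X → X → ℝ) (κ : ℝ) (hκ : 1 ≤ κ) (hqm : IsQuasiMetric d κ)
    (hd_meas : Measurable fun p : X × X => d p.1 p.2)
    (μ : Measure X) (η : ℝ) (hη : 0 < η)
    (a A : ℝ) (ha : 0 < a) (haA : a ≤ A) (hAhl : IsAhlfors d μ η a A)
    (γ : ℝ) (hγ0 : 0 < γ) (hγ2η : γ < 2 * η)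
    (p₁ p₂ p₃ : ℝ) (hp₁ : 1 < p₁) (hp₂ : 1 < p₂)
    (hp₃pos : 0 < 1 / p₃)
    (hp₃ : 1 / p₃ = 1 / p₁ + 1 / p₂ - (2 * η - γ) / η) :
    ∃ C : ℝ, 0 < C ∧ ∀ f g : X → ℝ≥0∞, Measurable f → Measurable g →
      lpNorm μ p₃ (Tgamma d μ γ f g) ≤
        ENNReal.ofReal C * lpNorm μ p₁ f * lpNorm μ p₂ g :=
  statement0_general (by linarith) hqm.2.2.1 hqm.2.2.2 hd_meas hη
    (fun x r hr => (hAhl x r hr).2) hγ2η hp₁ hp₂ hp₃pos hp₃
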